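/- arXiv:2601.00486 — 14 statements merged into one kernel-verified Lean document; each statement's English description precedes it below -/
import Mathlib

section
/- Let S be a semigroup in which every element is idempotent (a * a = a for all a ∈ S), and let F : (ℤ → S) → (ℤ → S) be the cellular automaton global map induced by f(u,v) = u * v. Then for every n ∈ ℕ, every configuration x : ℤ → S and every i ∈ ℤ, the state of cell i after n iterations equals the left-associated product of consecutive states: [F^[n] x] i = x(i) * x(i+1) * ⋯ * x(i+n). -/
/-- The product `x i * ⋯ * x (i+n)`. -/
def consProd {S : Type*} [Semigroup S] (x : ℤ → S) (i : ℤ) : ℕ → S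
  | 0 => x i
  | n + 1 => consProd x i n * x (i + n + 1)

theorem consProd_left {S : Type*} [Semigroup S] (x : ℤ → S) (i : ℤ) (n : ℕ) :
    consProd x i (n + 1) = x i * consProd x (i + 1) n := by
  induction n with
  | zero => simp [consProd]
  | succ m ih =>
    rw [consProd, ih, consProd, mul_assoc]
    congr 3
    push_cast
    ring

theorem foldl_eq_consProd {S : Type*} [Semigroup S] (x : ℤ → S) (i : ℤ) (n : ℕ) :
    (List.range n).foldl (fun a j => a * x (i + j + 1)) (x i) = consProd x i n := by
  induction n with
  | zero => simp [consProd]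
  | succ m ih =>
    simp only [List.bind_eq_flatMap, List.pure_def, List.range_succ, List.flatMap_append,
      List.foldl_append] at ih ⊢
    rw [ih]
    simp [consProd]

/-- Idempotent semigroup CA: the state after `n` iterations is the
left-associated product `x i * x (i+1) * ⋯ * x (i+n)`. -/
theorem stmt_0 {S : Type*} [Semigroup S] (hidem : ∀ a : S, a * a = a)
    (F : (ℤ → S) → (ℤ → S))
    (hF : ∀ x : ℤ → S, ∀ i : ℤ, F x i = x i * x (i + 1)) :
    ∀ (n : ℕ) (x : ℤ → S) (i : ℤ),
      F^[n] x i = (List.range n).foldl (fun a j => a * x (i + j + 1)) (x i) := by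
  intro n x i
  rw [foldl_eq_consProd]
  induction n generalizing i with
  | zero => simp [consProd]
  | succ n ih =>
    rw [Function.iterate_succ_apply', hF, ih, ih, consProd_left]
    cases n with
    | zero => simp [consProd]
    | succ m =>
      rw [consProd_left, consProd, mul_assoc, ← mul_assoc (consProd _ _ _) (consProd _ _ _), hidem]
end

section
/- Let M be a commutative monoid and let F : (ℤ → M) → (ℤ → M) be the cellular automaton global map induced by f(u,v) = u * v. Then for every n ∈ ℕ, every configuration x : ℤ → M and every i ∈ ℤ, [F^[n] x] i = ∏_{j=0}^{n} x(i+j)^{C(n,j)}, where C(n,j) denotes the binomial coefficient n choose j. -/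
/-- Commutative monoid CA: the state after `n` iterations is
`∏_{j=0}^{n} x (i+j) ^ C(n,j)`. -/
theorem stmt_1 {M : Type*} [CommMonoid M]
    (F : (ℤ → M) → (ℤ → M))
    (hF : ∀ x : ℤ → M, ∀ i : ℤ, F x i = x i * x (i + 1)) :
    ∀ (n : ℕ) (x : ℤ → M) (i : ℤ),
      F^[n] x i = ∏ j ∈ Finset.range (n + 1), x (i + j) ^ (n.choose j) := by
  intro n
  induction n with
  | zero => intro x i; simp
  | succ n ih =>
    intro x i
    rw [Function.iterate_succ_apply', hF, ih, ih]
    have h1 : ∏ j ∈ Finset.range (n + 1), x (i + j) ^ (n.choose j)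
        = ∏ j ∈ Finset.range (n + 1 + 1), x (i + j) ^ (n.choose j) := by
      rw [Finset.prod_range_succ _ (n + 1), Nat.choose_succ_self, pow_zero, mul_one]
    have h2 : ∏ j ∈ Finset.range (n + 1), x (i + 1 + j) ^ (n.choose j)
        = ∏ j ∈ Finset.range (n + 1), x (i + (j + 1 : ℕ)) ^ (n.choose j) := by
      refine Finset.prod_congr rfl fun j _ => ?_
      congr 2
      push_cast
      ring
    rw [h1, h2, Finset.prod_range_succ', Finset.prod_range_succ' _ (n + 1)]
    simp only [Nat.choose_succ_succ, pow_add, Finset.prod_mul_distrib, Nat.choose_zero_right]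
    rw [mul_comm, mul_assoc]
end

section
/- Let F : (ℤ → ℤ) → (ℤ → ℤ) be the cellular automaton global map induced by the local function f(u,v) = 1 + (v² − v − 1)(u² − u − 1) (the rule of semigroup G₂). Suppose x : ℤ → ℤ satisfies x(i) ∈ {0,1,2} for all i ∈ ℤ. Then for every n ≥ 1 and every i ∈ ℤ, [F^[n] x] i = 1 + ∏_{j=0}^{n} (x(i+j)² − x(i+j) − 1)^{C(n,j)}, where C(n,j) is the binomial coefficient n choose j. -/
theorem pascal_prod (s : ℤ → ℤ) (n : ℕ) (i : ℤ) :
    ∏ j ∈ Finset.range (n + 1 + 1), s (i + j) ^ ((n + 1).choose j) =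
      (∏ j ∈ Finset.range (n + 1), s (i + 1 + j) ^ (n.choose j)) *
        ∏ j ∈ Finset.range (n + 1), s (i + j) ^ (n.choose j) := by
  have h : ∏ j ∈ Finset.range (n + 1), s (i + j) ^ (n.choose j) =
      ∏ j ∈ Finset.range (n + 1 + 1), s (i + j) ^ (n.choose j) := by
    rw [Finset.prod_range_succ _ (n + 1)]
    simp
  rw [h, Finset.prod_range_succ' _ (n + 1), Finset.prod_range_succ' _ (n + 1), ← mul_assoc,
    ← Finset.prod_mul_distrib]
  congr 1
  · refine Finset.prod_congr rfl fun j _ => ?_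
    have e : i + ((j + 1 : ℕ) : ℤ) = i + 1 + j := by push_cast; ring
    rw [e, Nat.choose_succ_succ, pow_add]
  · simp

/-- Rule G₂: `[F^[n] x] i = 1 + ∏_{j=0}^{n} (x(i+j)² − x(i+j) − 1)^{C(n,j)}`. -/
theorem stmt_3 (F : (ℤ → ℤ) → (ℤ → ℤ))
    (hF : ∀ x : ℤ → ℤ, ∀ i : ℤ,
      F x i = 1 + (x (i + 1) ^ 2 - x (i + 1) - 1) * (x i ^ 2 - x i - 1))
    (x : ℤ → ℤ) (hx : ∀ i : ℤ, x i ∈ ({0, 1, 2} : Set ℤ)) :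
    ∀ n : ℕ, 1 ≤ n → ∀ i : ℤ,
      F^[n] x i = 1 + ∏ j ∈ Finset.range (n + 1),
        (x (i + j) ^ 2 - x (i + j) - 1) ^ (n.choose j) := by
  have hs : ∀ i, (x i ^ 2 - x i - 1) ^ 2 = 1 := by
    intro i
    rcases hx i with h | h | h <;> rw [h] <;> norm_num
  have hP : ∀ (n : ℕ) (i : ℤ), (∏ j ∈ Finset.range (n + 1),
        (x (i + j) ^ 2 - x (i + j) - 1) ^ (n.choose j)) ^ 2 = 1 := by
    intro n i
    rw [← Finset.prod_pow]
    refine Finset.prod_eq_one fun j _ => ?_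
    rw [← pow_mul, mul_comm, pow_mul, hs, one_pow]
  have key : ∀ (n : ℕ) (i : ℤ), (F^[n] x i) ^ 2 - F^[n] x i - 1 =
      ∏ j ∈ Finset.range (n + 1), (x (i + j) ^ 2 - x (i + j) - 1) ^ (n.choose j) := by
    intro n
    induction n with
    | zero => intro i; simp
    | succ n ih =>
      intro i
      rw [Function.iterate_succ_apply', hF, ih, ih,
        ← pascal_prod (fun k => x k ^ 2 - x k - 1)]
      linear_combination hP (n + 1) i
  intro n hn i
  obtain ⟨m, rfl⟩ : ∃ m, n = m + 1 := ⟨n - 1, by omega⟩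
  rw [Function.iterate_succ_apply', hF, key, key,
    ← pascal_prod (fun k => x k ^ 2 - x k - 1)]
end

section
/- Let F : (ℤ → ℤ) → (ℤ → ℤ) be the cellular automaton global map induced by the local function f(u,v) = 2·u·(u−2)·v·(v−2) (the rule of semigroup G₃). Suppose x : ℤ → ℤ satisfies x(i) ∈ {0,1,2} for all i ∈ ℤ. Then for every n ≥ 2 and every i ∈ ℤ, [F^[n] x] i = 0. -/
/-- Rule G₃: for `n ≥ 2`, `[F^[n] x] i = 0`. -/
theorem stmt_4 (F : (ℤ → ℤ) → (ℤ → ℤ))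
    (hF : ∀ x : ℤ → ℤ, ∀ i : ℤ,
      F x i = 2 * x i * (x i - 2) * x (i + 1) * (x (i + 1) - 2))
    (x : ℤ → ℤ) (hx : ∀ i : ℤ, x i ∈ ({0, 1, 2} : Set ℤ)) :
    ∀ n : ℕ, 2 ≤ n → ∀ i : ℤ, F^[n] x i = 0 := by
  have h1 : ∀ i, F x i = 0 ∨ F x i = 2 := by
    intro i
    have ha := hx i
    have hb := hx (i + 1)
    simp only [Set.mem_insert_iff, Set.mem_singleton_iff] at ha hb
    rw [hF]
    rcases ha with h | h | h <;> rcases hb with h' | h' | h' <;> rw [h, h'] <;> norm_num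
  intro n hn
  induction n, hn using Nat.le_induction with
  | base =>
    intro i
    change F (F x) i = 0
    rw [hF]
    rcases h1 i with h | h <;> rw [h] <;> ring
  | succ n hn ih =>
    intro i
    rw [Function.iterate_succ_apply', hF, ih i]
    ring
end

section
/- Let F : (ℤ → ℤ) → (ℤ → ℤ) be the cellular automaton global map induced by the local function f(u,v) = 1 + (v−1)(u−1) (the rule of semigroup G₄). Suppose x : ℤ → ℤ satisfies x(i) ∈ {0,1,2} for all i ∈ ℤ. Then for every n ∈ ℕ and every i ∈ ℤ, [F^[n] x] i = 1 + ∏_{j=0}^{n} (x(i+j) − 1)^{C(n,j)}, where C(n,j) is the binomial coefficient n choose j. -/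
/-- Rule G₄: `[F^[n] x] i = 1 + ∏_{j=0}^{n} (x(i+j) − 1)^{C(n,j)}`. -/
theorem stmt_5 (F : (ℤ → ℤ) → (ℤ → ℤ))
    (hF : ∀ x : ℤ → ℤ, ∀ i : ℤ, F x i = 1 + (x (i + 1) - 1) * (x i - 1))
    (x : ℤ → ℤ) (hx : ∀ i : ℤ, x i ∈ ({0, 1, 2} : Set ℤ)) :
    ∀ (n : ℕ) (i : ℤ),
      F^[n] x i = 1 + ∏ j ∈ Finset.range (n + 1), (x (i + j) - 1) ^ (n.choose j) := by
  intro n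
  induction n with
  | zero => intro i; simp
  | succ n ih =>
    intro i
    rw [Function.iterate_succ_apply', hF, ih, ih]
    have h2 : ∏ j ∈ Finset.range (n + 1), (x (i + j) - 1) ^ (n.choose j)
        = (∏ j ∈ Finset.range (n + 1), (x (i + ((j + 1 : ℕ) : ℤ)) - 1) ^ (n.choose (j + 1)))
          * (x (i + ((0 : ℕ) : ℤ)) - 1) ^ (n.choose 0) := by
      rw [← Finset.prod_range_succ' (fun j : ℕ => (x (i + (j : ℤ)) - 1) ^ (n.choose j)) (n + 1),
        Finset.prod_range_succ _ (n + 1)]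
      simp
    have h1 : ∏ j ∈ Finset.range (n + 1), (x (i + 1 + j) - 1) ^ (n.choose j)
        = ∏ j ∈ Finset.range (n + 1), (x (i + ((j + 1 : ℕ) : ℤ)) - 1) ^ (n.choose j) := by
      refine Finset.prod_congr rfl fun j _ => ?_
      have : i + 1 + (j : ℤ) = i + ((j + 1 : ℕ) : ℤ) := by push_cast; ring
      rw [this]
    rw [Finset.prod_range_succ' _ (n + 1)]
    simp only [Nat.choose_succ_succ', pow_add, Finset.prod_mul_distrib]
    rw [h1, h2]
    simp only [Nat.choose_zero_right]
    ring
end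

section
/- Let F : (ℤ → ℤ) → (ℤ → ℤ) be the cellular automaton global map induced by the local function f(u,v) = 1 + (v² − 3v + 1)(u² − 3u + 1) (the rule of semigroup G₆). Suppose x : ℤ → ℤ satisfies x(i) ∈ {0,1,2} for all i ∈ ℤ. Then for every n ≥ 1 and every i ∈ ℤ, [F^[n] x] i = 1 + ∏_{j=0}^{n} (x(i+j)² − 3·x(i+j) + 1)^{C(n,j)}, where C(n,j) is the binomial coefficient n choose j. -/
lemma prod_pascal (g : ℤ → ℤ) (n : ℕ) (i : ℤ) :
    ∏ j ∈ Finset.range (n + 1 + 1), g (i + j) ^ ((n + 1).choose j) =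
      (∏ j ∈ Finset.range (n + 1), g (i + 1 + j) ^ (n.choose j)) *
        ∏ j ∈ Finset.range (n + 1), g (i + j) ^ (n.choose j) := by
  have h : ∏ j ∈ Finset.range (n + 1), g (i + j) ^ (n.choose j) =
      ∏ j ∈ Finset.range (n + 1 + 1), g (i + j) ^ (n.choose j) := by
    rw [Finset.prod_range_succ _ (n + 1)]
    simp
  rw [h, Finset.prod_range_succ', Finset.prod_range_succ' _ (n + 1), ← mul_assoc,
    ← Finset.prod_mul_distrib]
  congr 1
  · refine Finset.prod_congr rfl fun j _ => ?_
    rw [Nat.choose_succ_succ, pow_add]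
    have e : i + ((j + 1 : ℕ) : ℤ) = i + 1 + j := by push_cast; ring
    rw [e]
  · simp

/-- Rule G₆: `[F^[n] x] i = 1 + ∏_{j=0}^{n} (x(i+j)² − 3x(i+j) + 1)^{C(n,j)}`. -/
theorem stmt_7 (F : (ℤ → ℤ) → (ℤ → ℤ))
    (hF : ∀ x : ℤ → ℤ, ∀ i : ℤ,
      F x i = 1 + (x (i + 1) ^ 2 - 3 * x (i + 1) + 1) * (x i ^ 2 - 3 * x i + 1))
    (x : ℤ → ℤ) (hx : ∀ i : ℤ, x i ∈ ({0, 1, 2} : Set ℤ)) :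
    ∀ n : ℕ, 1 ≤ n → ∀ i : ℤ,
      F^[n] x i = 1 + ∏ j ∈ Finset.range (n + 1),
        (x (i + j) ^ 2 - 3 * x (i + j) + 1) ^ (n.choose j) := by
  have hg : ∀ i, (x i ^ 2 - 3 * x i + 1) ^ 2 = 1 := by
    intro i
    have h := hx i
    simp only [Set.mem_insert_iff, Set.mem_singleton_iff] at h
    rcases h with h | h | h <;> rw [h] <;> norm_num
  have hP : ∀ (n : ℕ) (i : ℤ), (∏ j ∈ Finset.range (n + 1),
        (x (i + j) ^ 2 - 3 * x (i + j) + 1) ^ (n.choose j)) ^ 2 = 1 := by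
    intro n i
    rw [← Finset.prod_pow]
    refine Finset.prod_eq_one fun j _ => ?_
    rw [pow_right_comm, hg, one_pow]
  intro n hn
  induction n, hn using Nat.le_induction with
  | base =>
    intro i
    simp [Finset.prod_range_succ, hF, mul_comm]
  | succ n hn ih =>
    intro i
    rw [Function.iterate_succ_apply', hF, ih, ih,
      prod_pascal (fun k => x k ^ 2 - 3 * x k + 1) n i]
    have h1 := hP n i
    have h2 := hP n (i + 1)
    have key : ∀ s : ℤ, s ^ 2 = 1 → (1 + s) ^ 2 - 3 * (1 + s) + 1 = -s := by
      intro s hs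
      linear_combination hs
    rw [key _ h1, key _ h2, neg_mul_neg]
end

section
/- Let F : (ℤ → ℤ) → (ℤ → ℤ) be the cellular automaton global map induced by the local function f(u,v) = u·(u−2)·v·(v−2) (the rule of semigroup G₈). Suppose x : ℤ → ℤ satisfies x(i) ∈ {0,1,2} for all i ∈ ℤ. Then for every n ≥ 1 and every i ∈ ℤ, [F^[n] x] i = ∏_{j=0}^{n} x(i+j)·(2 − x(i+j)). -/
/-- Rule G₈: `[F^[n] x] i = ∏_{j=0}^{n} x(i+j)·(2 − x(i+j))`. -/
theorem stmt_8 (F : (ℤ → ℤ) → (ℤ → ℤ))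
    (hF : ∀ x : ℤ → ℤ, ∀ i : ℤ,
      F x i = x i * (x i - 2) * x (i + 1) * (x (i + 1) - 2))
    (x : ℤ → ℤ) (hx : ∀ i : ℤ, x i ∈ ({0, 1, 2} : Set ℤ)) :
    ∀ n : ℕ, 1 ≤ n → ∀ i : ℤ,
      F^[n] x i = ∏ j ∈ Finset.range (n + 1), x (i + j) * (2 - x (i + j)) := by
  obtain ⟨y, hy⟩ : ∃ y : ℤ → ℤ, ∀ i, x i * (2 - x i) = y i := ⟨_, fun _ => rfl⟩
  have hyy : ∀ i, y i * y i = y i := by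
    intro i
    rw [← hy]
    have h := hx i
    simp only [Set.mem_insert_iff, Set.mem_singleton_iff] at h
    rcases h with h | h | h <;> rw [h] <;> norm_num
  have hP : ∀ (n : ℕ) (i : ℤ), (∏ j ∈ Finset.range n, y (i + j)) *
      (∏ j ∈ Finset.range n, y (i + j)) = ∏ j ∈ Finset.range n, y (i + j) := by
    intro n i
    rw [← Finset.prod_mul_distrib]
    exact Finset.prod_congr rfl fun j _ => hyy _
  simp only [hy]
  intro n hn
  induction n, hn using Nat.le_induction with
  | base =>
    intro i
    simp only [Function.iterate_one, hF, Finset.prod_range_succ, Finset.prod_range_zero]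
    simp only [← hy]
    push_cast
    ring_nf
  | succ n hn ih =>
    intro i
    rw [Function.iterate_succ_apply', hF, ih, ih]
    have h1 := hP (n + 1) i
    have h2 := hP (n + 1) (i + 1)
    have hQ := hP n (i + 1)
    have e1 : ∏ j ∈ Finset.range (n + 1), y (i + j)
        = (∏ j ∈ Finset.range n, y (i + 1 + j)) * y i := by
      rw [Finset.prod_range_succ']
      push_cast
      simp only [add_zero, add_assoc, add_comm (1 : ℤ)]
    have e2 : ∏ j ∈ Finset.range (n + 1), y (i + 1 + j)
        = (∏ j ∈ Finset.range n, y (i + 1 + j)) * y (i + 1 + n) :=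
      Finset.prod_range_succ _ _
    have e3 : ∏ j ∈ Finset.range (n + 1 + 1), y (i + j)
        = (∏ j ∈ Finset.range (n + 1), y (i + j)) * y (i + 1 + n) := by
      rw [Finset.prod_range_succ]
      push_cast
      simp only [add_assoc, add_comm (1 : ℤ)]
    rw [e3]
    generalize (∏ j ∈ Finset.range (n + 1), y (i + j)) = P at *
    generalize (∏ j ∈ Finset.range (n + 1), y (i + 1 + j)) = R at *
    generalize (∏ j ∈ Finset.range n, y (i + 1 + j)) = Q at *
    have k1 : P * (P - 2) = -P := by linear_combination h1
    have k2 : R * (R - 2) = -R := by linear_combination h2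
    calc P * (P - 2) * R * (R - 2) = (P * (P - 2)) * (R * (R - 2)) := by ring
      _ = P * R := by rw [k1, k2]; ring
      _ = P * y (i + 1 + n) := by
        rw [e1, e2]; linear_combination (y i * y (i + 1 + n)) * hQ
end

section
/- Let F : (ℤ → ℚ) → (ℤ → ℚ) be the cellular automaton global map induced by the local function f(u,v) = (1/4)·u·v·(3−v)·(3−u) (the rule of semigroup G₉). Suppose x : ℤ → ℚ satisfies x(i) ∈ {0,1,2} for all i ∈ ℤ. Then for every n ≥ 1 and every i ∈ ℤ, [F^[n] x] i = ∏_{j=0}^{n} (1/2)·x(i+j)·(3 − x(i+j)). -/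
/-- Products of consecutive idempotent values overlap. -/
theorem aux_prod (g : ℤ → ℚ) (hg : ∀ i, g i * g i = g i) (n : ℕ) (i : ℤ) :
    (∏ j ∈ Finset.range (n + 1), g (i + j)) * (∏ j ∈ Finset.range (n + 1), g (i + 1 + j))
      = ∏ j ∈ Finset.range (n + 2), g (i + j) := by
  have h1 : ∀ m : ℕ, ∏ j ∈ Finset.range (m + 1), g (i + j)
      = (∏ j ∈ Finset.range m, g (i + 1 + j)) * g i := by
    intro m
    rw [Finset.prod_range_succ']
    congr 1
    · refine Finset.prod_congr rfl fun j _ => ?_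
      congr 1
      push_cast
      ring
    · simp
  have hQ : (∏ j ∈ Finset.range n, g (i + 1 + j)) * (∏ j ∈ Finset.range n, g (i + 1 + j))
      = ∏ j ∈ Finset.range n, g (i + 1 + j) := by
    rw [← Finset.prod_mul_distrib]
    exact Finset.prod_congr rfl fun j _ => hg _
  rw [h1 n, h1 (n + 1), Finset.prod_range_succ]
  linear_combination (g i * g (i + 1 + n)) * hQ

/-- Rule G₉: `[F^[n] x] i = ∏_{j=0}^{n} (1/2)·x(i+j)·(3 − x(i+j))`. -/
theorem stmt_9 (F : (ℤ → ℚ) → (ℤ → ℚ))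
    (hF : ∀ x : ℤ → ℚ, ∀ i : ℤ,
      F x i = (1 / 4) * x i * x (i + 1) * (3 - x (i + 1)) * (3 - x i))
    (x : ℤ → ℚ) (hx : ∀ i : ℤ, x i ∈ ({0, 1, 2} : Set ℚ)) :
    ∀ n : ℕ, 1 ≤ n → ∀ i : ℤ,
      F^[n] x i = ∏ j ∈ Finset.range (n + 1), (1 / 2) * x (i + j) * (3 - x (i + j)) := by
  intro n hn
  have hg : ∀ i : ℤ, ((1 / 2) * x i * (3 - x i)) * ((1 / 2) * x i * (3 - x i))
      = (1 / 2) * x i * (3 - x i) := by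
    intro i
    rcases hx i with h | h | h <;> rw [h] <;> norm_num
  induction n, hn using Nat.le_induction with
  | base =>
    intro i
    simp only [Function.iterate_one, hF, Finset.prod_range_succ, Finset.prod_range_zero]
    push_cast
    rw [add_zero]
    ring
  | succ n hn ih =>
    intro i
    have hP : ∀ k : ℤ, (F^[n] x k) * (F^[n] x k) = F^[n] x k := by
      intro k
      rw [ih k, ← Finset.prod_mul_distrib]
      exact Finset.prod_congr rfl fun j _ => hg _
    rw [Function.iterate_succ_apply', hF,
      ← aux_prod (fun i => (1 / 2) * x i * (3 - x i)) hg n i, ← ih i, ← ih (i + 1)]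
    have e1 := hP i
    have e2 := hP (i + 1)
    generalize F^[n] x i = a at *
    generalize F^[n] x (i + 1) = b at *
    linear_combination (-(1 / 4) * b * (3 - b)) * e1 - (1 / 2) * a * (1 / 2) * 2 * e2
end

section
/- Let F : (ℤ → ℤ) → (ℤ → ℤ) be the cellular automaton global map induced by the local function f(u,v) = u·v·(u + v − u·v) (the rule of semigroup G₁₀). Suppose x : ℤ → ℤ satisfies x(i) ∈ {0,1,2} for all i ∈ ℤ. Then for every n ≥ 1 and every i ∈ ℤ, [F^[n] x] i = x(i)·x(i+n)·(x(i) + x(i+n) − x(i)·x(i+n)) · ∏_{j=1}^{n−1} x(i+j)·(2 − x(i+j)) (the product being empty, hence 1, when n = 1). -/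
theorem stmt_10_aux (F : (ℤ → ℤ) → (ℤ → ℤ))
    (hF : ∀ x : ℤ → ℤ, ∀ i : ℤ,
      F x i = x i * x (i + 1) * (x i + x (i + 1) - x i * x (i + 1)))
    (x : ℤ → ℤ) (hx : ∀ i : ℤ, x i = 0 ∨ x i = 1 ∨ x i = 2) (m : ℕ) :
    ∀ i : ℤ,
      F^[m + 1] x i = x i * x (i + m + 1) * (x i + x (i + m + 1) - x i * x (i + m + 1)) *
        ∏ k ∈ Finset.range m, x (i + 1 + k) * (2 - x (i + 1 + k)) := by
  induction m with
  | zero => intro i; simp [hF]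
  | succ m ih =>
    intro i
    rw [Function.iterate_succ_apply', hF, ih, ih]
    rcases m with _ | m
    · have e : i + ((0 + 1 : ℕ) : ℤ) + 1 = i + 1 + 1 := by push_cast; ring
      rw [e]
      simp only [Finset.prod_range_succ, Finset.prod_range_zero, Nat.cast_zero, add_zero]
      rcases hx i with h1 | h1 | h1 <;> rcases hx (i + 1) with h2 | h2 | h2 <;>
        rcases hx (i + 1 + 1) with h3 | h3 | h3 <;> simp [h1, h2, h3]
    · have hM : ∀ s : Finset ℕ,
          (∏ k ∈ s, x (i + 1 + 1 + k) * (2 - x (i + 1 + 1 + k))) = 0 ∨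
          (∏ k ∈ s, x (i + 1 + 1 + k) * (2 - x (i + 1 + 1 + k))) = 1 := by
        intro s
        induction s using Finset.induction_on with
        | empty => simp
        | insert a s ha ihs =>
          rw [Finset.prod_insert ha]
          rcases hx (i + 1 + 1 + a) with h | h | h <;> simp [h]
          simpa using ihs
      have e1 : ∏ k ∈ Finset.range (m + 1), x (i + 1 + k) * (2 - x (i + 1 + k)) =
          (∏ k ∈ Finset.range m, x (i + 1 + 1 + k) * (2 - x (i + 1 + 1 + k))) *
            (x (i + 1) * (2 - x (i + 1))) := by
        rw [Finset.prod_range_succ']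
        congr 1
        · refine Finset.prod_congr rfl fun k _ => ?_
          have : i + 1 + ((k + 1 : ℕ) : ℤ) = i + 1 + 1 + k := by push_cast; ring
          rw [this]
        · simp
      rw [Finset.prod_range_succ (fun k : ℕ => x (i + 1 + k) * (2 - x (i + 1 + k))) (m + 1),
        e1, Finset.prod_range_succ]
      have a1 : i + ((m + 1 : ℕ) : ℤ) + 1 = i + 1 + 1 + m := by push_cast; ring
      have a2 : i + 1 + ((m + 1 : ℕ) : ℤ) + 1 = i + 1 + 1 + m + 1 := by push_cast; ring
      have a3 : i + ((m + 1 + 1 : ℕ) : ℤ) + 1 = i + 1 + 1 + m + 1 := by push_cast; ring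
      have a4 : i + 1 + ((m + 1 : ℕ) : ℤ) = i + 1 + 1 + m := by push_cast; ring
      rw [a1, a2, a3, a4]
      have hM' := hM (Finset.range m)
      generalize (∏ k ∈ Finset.range m, x (i + 1 + 1 + k) * (2 - x (i + 1 + 1 + k))) = M at *
      have h1 := hx i
      have h2 := hx (i + 1)
      have h3 := hx (i + 1 + 1 + m)
      have h4 := hx (i + 1 + 1 + m + 1)
      generalize x (i + 1 + 1 + m + 1) = d at *
      generalize x (i + 1 + 1 + m) = c at *
      generalize x (i + 1) = b at *
      generalize x i = a at *
      clear ih hM e1 hF hx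
      rcases hM' with rfl | rfl
      · simp
      · rcases h1 with rfl | rfl | rfl <;> rcases h2 with rfl | rfl | rfl <;>
          rcases h3 with rfl | rfl | rfl <;> rcases h4 with rfl | rfl | rfl <;> norm_num

/-- Rule G₁₀. -/
theorem stmt_10 (F : (ℤ → ℤ) → (ℤ → ℤ))
    (hF : ∀ x : ℤ → ℤ, ∀ i : ℤ,
      F x i = x i * x (i + 1) * (x i + x (i + 1) - x i * x (i + 1)))
    (x : ℤ → ℤ) (hx : ∀ i : ℤ, x i ∈ ({0, 1, 2} : Set ℤ)) :
    ∀ n : ℕ, 1 ≤ n → ∀ i : ℤ,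
      F^[n] x i = x i * x (i + n) * (x i + x (i + n) - x i * x (i + n)) *
        ∏ j ∈ Finset.Icc 1 (n - 1), x (i + j) * (2 - x (i + j)) := by
  intro n hn i
  obtain ⟨m, rfl⟩ : ∃ m, n = m + 1 := ⟨n - 1, by omega⟩
  rw [stmt_10_aux F hF x (fun i => by simpa using hx i) m i]
  have e : i + ((m + 1 : ℕ) : ℤ) = i + m + 1 := by push_cast; ring
  rw [e]
  congr 1
  refine Finset.prod_bij (fun k _ => k + 1) ?_ ?_ ?_ ?_
  · intro k hk
    simp at hk ⊢
    omega
  · intro a _ b _ h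
    simpa using h
  · intro b hb
    simp at hb
    exact ⟨b - 1, by simp; omega, by omega⟩
  · intro k _
    have : i + ((k + 1 : ℕ) : ℤ) = i + 1 + k := by push_cast; ring
    rw [this]
end

section
/- Let F : (ℤ → ℤ) → (ℤ → ℤ) be the cellular automaton global map induced by the local function f(u,v) = u·v·(2 − u) (the rule of semigroup G₁₂). Suppose x : ℤ → ℤ satisfies x(i) ∈ {0,1,2} for all i ∈ ℤ. Then for every n ∈ ℕ and every i ∈ ℤ, [F^[n] x] i = x(i+n) · ∏_{j=0}^{n−1} x(i+j)·(2 − x(i+j)). -/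
/-- Rule G₁₂: `[F^[n] x] i = x(i+n) · ∏_{j=0}^{n−1} x(i+j)·(2 − x(i+j))`. -/
theorem stmt_12 (F : (ℤ → ℤ) → (ℤ → ℤ))
    (hF : ∀ x : ℤ → ℤ, ∀ i : ℤ, F x i = x i * x (i + 1) * (2 - x i))
    (x : ℤ → ℤ) (hx : ∀ i : ℤ, x i ∈ ({0, 1, 2} : Set ℤ)) :
    ∀ (n : ℕ) (i : ℤ),
      F^[n] x i = x (i + n) * ∏ j ∈ Finset.range n, x (i + j) * (2 - x (i + j)) := by
  have idem : ∀ (n : ℕ) (i : ℤ),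
      (∏ j ∈ Finset.range n, x (i + j) * (2 - x (i + j))) *
        (∏ j ∈ Finset.range n, x (i + j) * (2 - x (i + j))) =
      ∏ j ∈ Finset.range n, x (i + j) * (2 - x (i + j)) := by
    intro n i
    rw [← Finset.prod_mul_distrib]
    refine Finset.prod_congr rfl fun j _ => ?_
    have h := hx (i + j)
    simp only [Set.mem_insert_iff, Set.mem_singleton_iff] at h
    rcases h with h | h | h <;> rw [h] <;> norm_num
  intro n
  induction n with
  | zero => intro i; simp
  | succ n ih =>
    intro i
    rw [Function.iterate_succ_apply', hF, ih i, ih (i + 1)]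
    have hP := idem n i
    have hR := idem n (i + 1)
    have h1 := Finset.prod_range_succ (fun j : ℕ => x (i + j) * (2 - x (i + j))) n
    have h2 := Finset.prod_range_succ' (fun j : ℕ => x (i + j) * (2 - x (i + j))) n
    have h3 : ∏ j ∈ Finset.range n, x (i + (j + 1 : ℕ)) * (2 - x (i + (j + 1 : ℕ))) =
        ∏ j ∈ Finset.range n, x (i + 1 + j) * (2 - x (i + 1 + j)) := by
      refine Finset.prod_congr rfl fun j _ => ?_
      have : i + ((j + 1 : ℕ) : ℤ) = i + 1 + j := by push_cast; ring
      rw [this]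
    have h4 : i + ((n + 1 : ℕ) : ℤ) = i + 1 + n := by push_cast; ring
    rw [h3] at h2
    rw [h4]
    generalize (∏ j ∈ Finset.range (n + 1), x (i + j) * (2 - x (i + j))) = Q at *
    generalize (∏ j ∈ Finset.range n, x (i + j) * (2 - x (i + j))) = P at *
    generalize (∏ j ∈ Finset.range n, x (i + 1 + j) * (2 - x (i + 1 + j))) = R at *
    have h5 : Q * R = Q := by rw [h2, mul_right_comm, hR]
    generalize x (i + n) = a at *
    generalize x (i + 1 + n) = b at *
    linear_combination (-a ^ 2 * b * R) * hP - b * R * h1 + b * h5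
end

section
/- Let F : (ℤ → ℚ) → (ℤ → ℚ) be the cellular automaton global map induced by the local function f(u,v) = (1/2)·u·v·(3·u·v − 5·u − 5·v + 9) (the rule of semigroup G₁₄). Suppose x : ℤ → ℚ satisfies x(i) ∈ {0,1,2} for all i ∈ ℤ. Then for every n ∈ ℕ and every i ∈ ℤ, [F^[n] x] i = ∏_{j=0}^{n} x(i+j)·(2 − x(i+j)) + 2·∏_{j=0}^{n} (1/2)·x(i+j)·(x(i+j) − 1). -/
/-- Rule G₁₄. -/
theorem stmt_14 (F : (ℤ → ℚ) → (ℤ → ℚ))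
    (hF : ∀ x : ℤ → ℚ, ∀ i : ℤ,
      F x i = (1 / 2) * x i * x (i + 1) *
        (3 * x i * x (i + 1) - 5 * x i - 5 * x (i + 1) + 9))
    (x : ℤ → ℚ) (hx : ∀ i : ℤ, x i ∈ ({0, 1, 2} : Set ℚ)) :
    ∀ (n : ℕ) (i : ℤ),
      F^[n] x i = (∏ j ∈ Finset.range (n + 1), x (i + j) * (2 - x (i + j)))
        + 2 * ∏ j ∈ Finset.range (n + 1), (1 / 2) * x (i + j) * (x (i + j) - 1) := by
  have h01 : ∀ (g : ℚ → ℚ), (∀ i, g (x i) = 0 ∨ g (x i) = 1) → ∀ (n : ℕ) (i : ℤ),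
      (∏ j ∈ Finset.range n, g (x (i + j))) = 0 ∨ (∏ j ∈ Finset.range n, g (x (i + j))) = 1 := by
    intro g hg n i
    induction n with
    | zero => right; simp
    | succ n ih =>
      rw [Finset.prod_range_succ]
      rcases ih with h | h <;> rcases hg (i + n) with h' | h' <;> simp [h, h']
  have shift : ∀ (g : ℚ → ℚ) (n : ℕ) (i : ℤ),
      (∏ j ∈ Finset.range (n + 1), g (x (i + j)))
        = g (x i) * ∏ j ∈ Finset.range n, g (x (i + 1 + j)) := by
    intro g n i
    rw [Finset.prod_range_succ', mul_comm]
    congr 1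
    · simp
    · apply Finset.prod_congr rfl
      intro j _
      congr 2
      push_cast
      ring
  have hx' : ∀ i, x i = 0 ∨ x i = 1 ∨ x i = 2 := by
    intro i
    simpa using hx i
  intro n
  induction n with
  | zero =>
    intro i
    simp
    ring
  | succ n ih =>
    intro i
    rw [Function.iterate_succ_apply', hF, ih i, ih (i + 1)]
    have hP := h01 (fun t => t * (2 - t))
      (by intro i; rcases hx' i with h | h | h <;> norm_num [h]) n (i + 1)
    have hQ := h01 (fun t => (1 / 2) * t * (t - 1))
      (by intro i; rcases hx' i with h | h | h <;> norm_num [h]) n (i + 1)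
    have s1 := shift (fun t => t * (2 - t))
    have s2 := shift (fun t => (1 / 2) * t * (t - 1))
    beta_reduce at hP hQ s1 s2
    rw [s1 (n + 1) i, s2 (n + 1) i, s1 n i, s2 n i]
    simp only [Finset.prod_range_succ]
    generalize (∏ j ∈ Finset.range n, x (i + 1 + j) * (2 - x (i + 1 + j))) = P at *
    generalize (∏ j ∈ Finset.range n, (1 / 2) * x (i + 1 + j) * (x (i + 1 + j) - 1)) = Q at *
    rcases hP with rfl | rfl <;> rcases hQ with rfl | rfl <;>
      rcases hx' i with h | h | h <;> rcases hx' (i + 1 + n) with h' | h' | h' <;>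
      rw [h, h'] <;> norm_num
end

section
/- Let F : (ℤ → ℚ) → (ℤ → ℚ) be the cellular automaton global map induced by the local function f(u,v) = (1/2)·u·(u·v² − u·v − v² − 2·u + v + 4) (the rule of semigroup G₁₅). Suppose x : ℤ → ℚ satisfies x(i) ∈ {0,1,2} for all i ∈ ℤ. Then for every n ∈ ℕ and every i ∈ ℤ, [F^[n] x] i = x(i)·(2 − x(i)) + 2·∏_{j=0}^{n} (1/2)·x(i+j)·(x(i+j) − 1). -/
/-- Rule G₁₅. -/
theorem stmt_15 (F : (ℤ → ℚ) → (ℤ → ℚ))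
    (hF : ∀ x : ℤ → ℚ, ∀ i : ℤ,
      F x i = (1 / 2) * x i *
        (x i * x (i + 1) ^ 2 - x i * x (i + 1) - x (i + 1) ^ 2
          - 2 * x i + x (i + 1) + 4))
    (x : ℤ → ℚ) (hx : ∀ i : ℤ, x i ∈ ({0, 1, 2} : Set ℚ)) :
    ∀ (n : ℕ) (i : ℤ),
      F^[n] x i = x i * (2 - x i)
        + 2 * ∏ j ∈ Finset.range (n + 1), (1 / 2) * x (i + j) * (x (i + j) - 1) := by
  intro n
  induction n generalizing x with
  | zero =>
    intro i
    simp
    ring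
  | succ n ih =>
    intro i
    have key : ∀ i : ℤ, F x i ∈ ({0, 1, 2} : Set ℚ) ∧
        F x i * (2 - F x i) = x i * (2 - x i) ∧
        (1 / 2) * F x i * (F x i - 1) =
          ((1 / 2) * x i * (x i - 1)) * ((1 / 2) * x (i + 1) * (x (i + 1) - 1)) := by
      intro i
      rw [hF x i]
      have h1 := hx i
      have h2 := hx (i + 1)
      simp only [Set.mem_insert_iff, Set.mem_singleton_iff] at h1 h2 ⊢
      rcases h1 with h1 | h1 | h1 <;> rcases h2 with h2 | h2 | h2 <;>
        rw [h1, h2] <;> norm_num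
    have hg : ∀ i : ℤ, ((1 / 2) * x i * (x i - 1)) * ((1 / 2) * x i * (x i - 1))
        = (1 / 2) * x i * (x i - 1) := by
      intro i
      have h1 := hx i
      simp only [Set.mem_insert_iff, Set.mem_singleton_iff] at h1
      rcases h1 with h1 | h1 | h1 <;> rw [h1] <;> norm_num
    rw [Function.iterate_succ_apply, ih (F x) (fun i => (key i).1) i, (key i).2.1,
      Finset.prod_congr rfl (fun (j : ℕ) _ => (key (i + j)).2.2), Finset.prod_mul_distrib]
    have hs : ∀ j : ℕ, i + (j : ℤ) + 1 = i + ((j + 1 : ℕ) : ℤ) := by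
      intro j
      push_cast
      ring
    simp only [hs]
    generalize hG : (fun j : ℕ => (1 / 2) * x (i + (j : ℤ)) * (x (i + (j : ℤ)) - 1)) = G
    have hG' : ∀ j : ℕ, (1 / 2) * x (i + (j : ℤ)) * (x (i + (j : ℤ)) - 1) = G j := by
      intro j
      rw [← hG]
    have hGG : ∀ j, G j * G j = G j := by
      intro j
      rw [← hG' j]
      exact hg _
    simp only [hG']
    have hQ : (∏ j ∈ Finset.range n, G (j + 1)) * (∏ j ∈ Finset.range n, G (j + 1))
        = ∏ j ∈ Finset.range n, G (j + 1) := by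
      rw [← Finset.prod_mul_distrib]
      exact Finset.prod_congr rfl (fun j _ => hGG _)
    rw [Finset.prod_range_succ' G (n + 1), Finset.prod_range_succ' G n,
      Finset.prod_range_succ (fun j => G (j + 1)) n]
    linear_combination 2 * G 0 * G (n + 1) * hQ
end

section
/- Let F : (ℤ → ℤ) → (ℤ → ℤ) be the cellular automaton global map induced by the local function f(u,v) = 1 + (v−1)²·(u−1) (the rule of semigroup G₁₆). Suppose x : ℤ → ℤ satisfies x(i) ∈ {0,1,2} for all i ∈ ℤ. Then for every n ∈ ℕ and every i ∈ ℤ, [F^[n] x] i = 1 + (x(i) − 1) · ∏_{j=1}^{n} (x(i+j) − 1)². -/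
/-- Rule G₁₆: `[F^[n] x] i = 1 + (x i − 1) · ∏_{j=1}^{n} (x(i+j) − 1)²`. -/
theorem stmt_16 (F : (ℤ → ℤ) → (ℤ → ℤ))
    (hF : ∀ x : ℤ → ℤ, ∀ i : ℤ, F x i = 1 + (x (i + 1) - 1) ^ 2 * (x i - 1))
    (x : ℤ → ℤ) (hx : ∀ i : ℤ, x i ∈ ({0, 1, 2} : Set ℤ)) :
    ∀ (n : ℕ) (i : ℤ),
      F^[n] x i = 1 + (x i - 1) * ∏ j ∈ Finset.Icc 1 n, (x (i + j) - 1) ^ 2 := by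
  have hz : ∀ i, ((x i - 1) ^ 2) ^ 2 = (x i - 1) ^ 2 := by
    intro i
    have h := hx i
    simp only [Set.mem_insert_iff, Set.mem_singleton_iff] at h
    rcases h with h | h | h <;> rw [h] <;> norm_num
  have hP : ∀ (n : ℕ) (i : ℤ), (∏ j ∈ Finset.Icc 1 n, (x (i + j) - 1) ^ 2) ^ 2
      = ∏ j ∈ Finset.Icc 1 n, (x (i + j) - 1) ^ 2 := by
    intro n i
    rw [← Finset.prod_pow]
    exact Finset.prod_congr rfl (fun j _ => hz _)
  have hR : ∀ (n : ℕ) (i : ℤ), ∏ j ∈ Finset.Icc 1 (n + 1), (x (i + j) - 1) ^ 2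
      = (∏ j ∈ Finset.Icc 1 n, (x (i + j) - 1) ^ 2) * (x (i + (n + 1 : ℕ)) - 1) ^ 2 := by
    intro n i
    rw [Finset.prod_Icc_succ_top (by omega)]
  have hL : ∀ (n : ℕ) (i : ℤ), ∏ j ∈ Finset.Icc 1 (n + 1), (x (i + j) - 1) ^ 2
      = (x (i + 1) - 1) ^ 2 * ∏ j ∈ Finset.Icc 1 n, (x (i + 1 + j) - 1) ^ 2 := by
    intro n i
    induction n with
    | zero => simp
    | succ n ih =>
      rw [hR (n + 1) i, ih, hR n (i + 1), mul_assoc]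
      have : i + ((n + 1 + 1 : ℕ) : ℤ) = i + 1 + ((n + 1 : ℕ) : ℤ) := by push_cast; ring
      rw [this]
  intro n
  induction n with
  | zero => intro i; simp
  | succ n ih =>
    intro i
    rw [Function.iterate_succ_apply', hF, ih, ih]
    have h1 := hP n (i + 1)
    have h2 := hP n i
    have h3 := hL n i
    have h4 := hR n i
    rw [h4] at h3 ⊢
    generalize (∏ j ∈ Finset.Icc 1 n, (x (i + 1 + j) - 1) ^ 2) = Q at *
    generalize (∏ j ∈ Finset.Icc 1 n, (x (i + j) - 1) ^ 2) = P at *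
    generalize (x (i + (n + 1 : ℕ)) - 1) ^ 2 = z at *
    linear_combination (x (i + 1) - 1) ^ 2 * (x i - 1) * P * h1 - (x i - 1) * P * h3
      + (x i - 1) * z * h2
end

section
/- Let F : (ℤ → ℚ) → (ℤ → ℚ) be the cellular automaton global map induced by the local function f(u,v) = (1/2)·u·(u·v − 2·u − v + 4) (the rule of semigroup G₁₈). Suppose x : ℤ → ℚ satisfies x(i) ∈ {0,1,2} for all i ∈ ℤ. For i ∈ ℤ and k ∈ ℕ define H(i,k) by H(i,0) = x(i)·(2 − x(i)) and, for k ≥ 1, H(i,k) = x(i+k)·(2 − x(i+k)) · ∏_{j=0}^{k−1} (1/2)·x(i+j)·(x(i+j) − 1). Then for every n ∈ ℕ and every i ∈ ℤ, [F^[n] x] i = 1 − ∏_{k=0}^{n} (1 − H(i,k)) + 2·∏_{j=0}^{n} (1/2)·x(i+j)·(x(i+j) − 1). -/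
/-- Rule G₁₈. -/
theorem stmt_17 (F : (ℤ → ℚ) → (ℤ → ℚ))
    (hF : ∀ x : ℤ → ℚ, ∀ i : ℤ,
      F x i = (1 / 2) * x i * (x i * x (i + 1) - 2 * x i - x (i + 1) + 4))
    (x : ℤ → ℚ) (hx : ∀ i : ℤ, x i ∈ ({0, 1, 2} : Set ℚ))
    (H : ℤ → ℕ → ℚ)
    (hH0 : ∀ i : ℤ, H i 0 = x i * (2 - x i))
    (hHk : ∀ (i : ℤ) (k : ℕ), 1 ≤ k →
      H i k = x (i + k) * (2 - x (i + k)) *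
        ∏ j ∈ Finset.range k, (1 / 2) * x (i + j) * (x (i + j) - 1)) :
    ∀ (n : ℕ) (i : ℤ),
      F^[n] x i = 1 - (∏ k ∈ Finset.range (n + 1), (1 - H i k))
        + 2 * ∏ j ∈ Finset.range (n + 1), (1 / 2) * x (i + j) * (x (i + j) - 1) := by
  have key : ∀ n : ℕ, (∀ i, F^[n] x i ∈ ({0, 1, 2} : Set ℚ)) ∧ ∀ i, F^[n+1] x i =
      (1 / 2) * x i * (x i * F^[n] x (i + 1) - 2 * x i - F^[n] x (i + 1) + 4) := by
    intro n
    induction n with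
    | zero => exact ⟨hx, fun i => by simpa using hF x i⟩
    | succ n ih =>
      obtain ⟨h1, h2⟩ := ih
      have h3 : ∀ i, F^[n+1] x i = (1 / 2) * F^[n] x i *
          (F^[n] x i * F^[n] x (i + 1) - 2 * F^[n] x i - F^[n] x (i + 1) + 4) := by
        intro i
        rw [Function.iterate_succ_apply', hF]
      refine ⟨fun i => ?_, fun i => ?_⟩
      · rw [h3]
        have ha := h1 i
        have hb := h1 (i + 1)
        simp only [Set.mem_insert_iff, Set.mem_singleton_iff] at ha hb ⊢
        rcases ha with ha | ha | ha <;> rcases hb with hb | hb | hb <;> rw [ha, hb] <;> norm_num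
      · rw [Function.iterate_succ_apply', hF, h2 i, h3 (i + 1)]
        have ha := hx i
        have hb := h1 (i + 1)
        simp only [Set.mem_insert_iff, Set.mem_singleton_iff] at ha hb
        rcases ha with ha | ha | ha <;> rcases hb with hb | hb | hb <;> rw [ha, hb] <;> ring
  have hP : ∀ (i : ℤ) (k : ℕ),
      ∏ j ∈ Finset.range (k + 1), (1 / 2) * x (i + j) * (x (i + j) - 1) =
      (∏ j ∈ Finset.range k, (1 / 2) * x (i + 1 + j) * (x (i + 1 + j) - 1)) *
        ((1 / 2) * x i * (x i - 1)) := by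
    intro i k
    rw [Finset.prod_range_succ']
    congr 1
    · refine Finset.prod_congr rfl fun j _ => ?_
      have : i + ((j + 1 : ℕ) : ℤ) = i + 1 + j := by push_cast; ring
      rw [this]
    · simp
  have hH : ∀ (i : ℤ) (k : ℕ), H i (k + 1) = ((1 / 2) * x i * (x i - 1)) * H (i + 1) k := by
    intro i k
    have e : i + ((k + 1 : ℕ) : ℤ) = i + 1 + k := by push_cast; ring
    rw [hHk i (k + 1) (by omega), hP, e]
    rcases Nat.eq_zero_or_pos k with rfl | hk
    · rw [hH0]; simp; ring
    · rw [hHk (i + 1) k hk]; ring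
  intro n
  induction n with
  | zero =>
    intro i
    simp [hH0]
    ring
  | succ n ih =>
    intro i
    rw [(key n).2 i, ih (i + 1), hP i (n + 1), Finset.prod_range_succ' _ (n + 1), hH0]
    simp only [hH]
    have ha := hx i
    simp only [Set.mem_insert_iff, Set.mem_singleton_iff] at ha
    rcases ha with ha | ha | ha <;> rw [ha]
    · simp
    · norm_num
    · norm_num
      ring
end
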